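/- The average uplink spectral efficiency in the interference-limited case with η = 4 and infinite P_u, R = ∫₀^∞ exp(−√x · arctan(√x))/(x+1) dx, is a finite constant independent of λ and ρ₀, and satisfies 0.7 < R < 0.85 (numerically R ≈ 0.77 nat/s/Hz). -/

import Mathlib

open Real MeasureTheory Set

/-!
Write `g t = t * arctan t`, so that the integrand at `x = t ^ 2` is `exp (-g t) / (x + 1)`. The idea
is to compare `g` with sums of functions `log (1 + a * t ^ 2)`: then `exp (-g t)` is compared with
a rational function of `x`, whose integral is elementary. Both comparisons agree with the expansion
`g t = x - x ^ 2 / 3 + ⋯` to first order. The minorant `log (1 + x / 5) + log (1 + 4 * x / 5)` of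
`g` is valid for all `x ≥ 0` and gives `R ≤ 25 / 4 * log 5 - 40 / 3 * log 2 ≈ 0.817`. A majorant of
this kind cannot be valid for all `x`, since `g` grows like `√x`; but `3 * log (1 + x / 3)` is one
up to `x = 9`, and `[0, 9]` already contributes `27 / 8 * log (5 / 2) - 153 / 64 ≈ 0.702`.
-/

lemma monotoneOn_Ici_of_hasDerivAt_nonneg {f f' : ℝ → ℝ} {a : ℝ}
    (hf : ∀ t ∈ Ici a, HasDerivAt f (f' t) t) (hf' : ∀ t ∈ Ici a, 0 ≤ f' t) :
    MonotoneOn f (Ici a) :=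
  monotoneOn_of_hasDerivWithinAt_nonneg (convex_Ici a)
    (fun t ht => (hf t ht).continuousAt.continuousWithinAt)
    (fun t ht => (hf t (interior_subset ht)).hasDerivWithinAt)
    (fun t ht => hf' t (interior_subset ht))

/- If `f t < 0`, then `f'` is negative somewhere before `t` and positive somewhere after `t`. Since
`f' a ≥ 0`, this makes `f'` first decrease and later increase, against the sign pattern of `f''`. -/
lemma nonneg_of_deriv2_nonpos_after_neg {f f' f'' : ℝ → ℝ} {a b : ℝ}
    (hf : ∀ t ∈ Icc a b, HasDerivAt f (f' t) t) (hf' : ∀ t ∈ Icc a b, HasDerivAt f' (f'' t) t)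
    (hf'' : ∀ x ∈ Icc a b, ∀ y ∈ Icc a b, x < y → f'' x < 0 → f'' y ≤ 0)
    (hfa : 0 ≤ f a) (hf'a : 0 ≤ f' a) (hfb : 0 ≤ f b) {t : ℝ} (ht : t ∈ Icc a b) : 0 ≤ f t := by
  have mean_value {h h' : ℝ → ℝ} (hh : ∀ x ∈ Icc a b, HasDerivAt h (h' x) x) {x y : ℝ}
      (hxy : x < y) (hx : x ∈ Icc a b) (hy : y ∈ Icc a b) :
      ∃ z ∈ Ioo x y, z ∈ Icc a b ∧ h' z * (y - x) = h y - h x := by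
    have hsub : Icc x y ⊆ Icc a b := Icc_subset_Icc hx.1 hy.2
    obtain ⟨z, hz, h_slope⟩ := exists_hasDerivAt_eq_slope h h' hxy
      (fun w hw => (hh w (hsub hw)).continuousAt.continuousWithinAt)
      (fun w hw => hh w (hsub (Ioo_subset_Icc_self hw)))
    exact ⟨z, hz, hsub (Ioo_subset_Icc_self hz), by rw [h_slope, div_mul_cancel₀ _ (by linarith)]⟩
  by_contra! hneg
  have hab : a ≤ b := ht.1.trans ht.2
  have hat : a < t := ht.1.lt_of_ne (by rintro rfl; linarith)
  have htb : t < b := ht.2.lt_of_ne (by rintro rfl; linarith)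
  obtain ⟨u, hu, hu', hfu⟩ := mean_value hf hat (left_mem_Icc.2 hab) ht
  obtain ⟨v, hv, hv', hfv⟩ := mean_value hf htb ht (right_mem_Icc.2 hab)
  have hu_neg : f' u < 0 := by
    by_contra! h
    nlinarith [mul_nonneg h (sub_nonneg.2 hat.le)]
  have hv_pos : 0 < f' v := by
    by_contra! h
    nlinarith [mul_nonneg (neg_nonneg.2 h) (sub_nonneg.2 htb.le)]
  have huv : u < v := hu.2.trans hv.1
  obtain ⟨p, hp, hp', hf'p⟩ := mean_value hf' hu.1 (left_mem_Icc.2 hab) hu'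
  obtain ⟨q, hq, hq', hf'q⟩ := mean_value hf' huv hu' hv'
  have hp_neg : f'' p < 0 := by
    by_contra! h
    nlinarith [mul_nonneg h (sub_nonneg.2 hu.1.le)]
  have hq_nonpos : f'' q ≤ 0 := hf'' p hp' q hq' (hp.2.trans hq.1) hp_neg
  nlinarith [mul_nonneg (neg_nonneg.2 hq_nonpos) (sub_nonneg.2 huv.le)]

lemma hasDerivAt_mul_arctan (t : ℝ) :
    HasDerivAt (fun t => t * arctan t) (arctan t + t / (1 + t ^ 2)) t :=
  ((hasDerivAt_id t).mul (hasDerivAt_arctan t)).congr_deriv (by simp [div_eq_mul_inv])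

lemma hasDerivAt_log_one_add_mul_sq {a : ℝ} (ha : 0 ≤ a) (t : ℝ) :
    HasDerivAt (fun t => log (1 + a * t ^ 2)) (2 * a * t / (1 + a * t ^ 2)) t := by
  have h : HasDerivAt (fun t : ℝ => 1 + a * t ^ 2) (2 * a * t) t :=
    (((hasDerivAt_pow 2 t).const_mul a).const_add 1).congr_deriv (by norm_num; ring)
  exact h.log (by positivity)

lemma hasDerivAt_div_add_sq {c : ℝ} (hc : 0 < c) (t : ℝ) :
    HasDerivAt (fun t => t / (c + t ^ 2)) ((c - t ^ 2) / (c + t ^ 2) ^ 2) t := by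
  have h : HasDerivAt (fun t : ℝ => c + t ^ 2) (2 * t) t := by
    simpa using (hasDerivAt_pow 2 t).const_add c
  exact ((hasDerivAt_id t).div h (by positivity)).congr_deriv (by simp only [id]; ring)

lemma three_mul_div_le_arctan {t : ℝ} (ht : 0 ≤ t) : 3 * (t / (3 + t ^ 2)) ≤ arctan t := by
  have hmono : MonotoneOn (fun t => arctan t - 3 * (t / (3 + t ^ 2))) (Ici 0) := by
    refine monotoneOn_Ici_of_hasDerivAt_nonneg
      (f' := fun t => 4 * t ^ 4 / ((1 + t ^ 2) * (3 + t ^ 2) ^ 2)) (fun t _ => ?_)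
      (fun t _ => by positivity)
    refine ((hasDerivAt_arctan t).sub
      ((hasDerivAt_div_add_sq three_pos t).const_mul 3)).congr_deriv ?_
    field_simp
    ring
  simpa using hmono self_mem_Ici ht ht

lemma log_add_log_le_mul_arctan {t : ℝ} (ht : 0 ≤ t) :
    log (1 + 1 / 5 * t ^ 2) + log (1 + 4 / 5 * t ^ 2) ≤ t * arctan t := by
  have hmono : MonotoneOn
      (fun t => t * arctan t - (log (1 + 1 / 5 * t ^ 2) + log (1 + 4 / 5 * t ^ 2))) (Ici 0) := by
    refine monotoneOn_Ici_of_hasDerivAt_nonneg (fun t _ => (hasDerivAt_mul_arctan t).sub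
      ((hasDerivAt_log_one_add_mul_sq (by norm_num) t).add
        (hasDerivAt_log_one_add_mul_sq (by norm_num) t))) fun t (ht : 0 ≤ t) => ?_
    have hrational : 3 * (t / (3 + t ^ 2)) + t / (1 + t ^ 2) -
        (2 * (1 / 5) * t / (1 + 1 / 5 * t ^ 2) + 2 * (4 / 5) * t / (1 + 4 / 5 * t ^ 2)) =
        (2 * t ^ 3 + 10 * t ^ 5) /
          ((3 + t ^ 2) * (1 + t ^ 2) * (5 + t ^ 2) * (5 + 4 * t ^ 2)) := by
      field_simp
      ring
    have hnonneg : 0 ≤ (2 * t ^ 3 + 10 * t ^ 5) /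
        ((3 + t ^ 2) * (1 + t ^ 2) * (5 + t ^ 2) * (5 + 4 * t ^ 2)) := by positivity
    linarith [three_mul_div_le_arctan ht]
  simpa using hmono self_mem_Ici ht ht

lemma arctan_three_le : arctan 3 ≤ 2 * log 2 := by
  have h : 3 * (3⁻¹ / (3 + 3⁻¹ ^ 2)) ≤ π / 2 - arctan 3 :=
    arctan_inv_of_pos three_pos ▸ three_mul_div_le_arctan (by norm_num)
  norm_num at h
  linarith [pi_lt_d4, log_two_gt_d9]

lemma mul_arctan_le_three_mul_log {t : ℝ} (ht : t ∈ Icc 0 3) :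
    t * arctan t ≤ 3 * log (1 + 1 / 3 * t ^ 2) := by
  rw [← sub_nonneg]
  refine nonneg_of_deriv2_nonpos_after_neg (a := 0) (b := 3)
    (f := fun t => 3 * log (1 + 1 / 3 * t ^ 2) - t * arctan t)
    (f' := fun t => 6 * (t / (3 + t ^ 2)) - (arctan t + t / (1 + t ^ 2)))
    (f'' := fun t => 2 * t ^ 2 / ((3 + t ^ 2) ^ 2 * (1 + t ^ 2) ^ 2) *
      (9 + 2 * t ^ 2 - 3 * (t ^ 2) ^ 2))
    (fun t _ => ?_) (fun t _ => ?_) (fun x hx y _ hxy hneg => ?_) ?_ ?_ ?_ ht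
  · refine (((hasDerivAt_log_one_add_mul_sq (by norm_num) t).const_mul 3).sub
      (hasDerivAt_mul_arctan t)).congr_deriv ?_
    field_simp
    ring
  · refine (((hasDerivAt_div_add_sq three_pos t).const_mul 6).sub
      ((hasDerivAt_arctan t).add (hasDerivAt_div_add_sq one_pos t))).congr_deriv ?_
    field_simp
    ring
  · have hx_neg : 9 + 2 * x ^ 2 - 3 * (x ^ 2) ^ 2 < 0 := neg_of_mul_neg_right hneg (by positivity)
    have hsq : x ^ 2 ≤ y ^ 2 := pow_le_pow_left₀ hx.1 hxy.le 2
    exact mul_nonpos_of_nonneg_of_nonpos (by positivity)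
      (by nlinarith [mul_nonneg (sq_nonneg x) (sub_nonneg.2 hsq)])
  · simp
  · simp
  · have hlog : log (1 + 1 / 3 * 3 ^ 2) = 2 * log 2 := by
      rw [← log_rpow two_pos]
      norm_num
    rw [hlog]
    linarith [arctan_three_le]

/-- The ccdf `P(SINR > x)` of the uplink signal-to-interference-plus-noise ratio, in the closed form
valid for path-loss exponent `4`, non-binding maximum power and negligible noise. For `x < 0` the
convention `√x = 0` gives the correct value `1`. -/
noncomputable def sinrCcdf (x : ℝ) : ℝ := exp (-(√x * arctan √x))

lemma sinrCcdf_pos (x : ℝ) : 0 < sinrCcdf x := exp_pos _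

lemma continuous_sinrCcdf : Continuous sinrCcdf := by
  unfold sinrCcdf
  fun_prop

lemma sinrCcdf_le {x : ℝ} (hx : 0 ≤ x) :
    sinrCcdf x ≤ ((1 + 1 / 5 * x) * (1 + 4 / 5 * x))⁻¹ := by
  have h := log_add_log_le_mul_arctan (sqrt_nonneg x)
  rw [sq_sqrt hx, ← log_mul (by positivity) (by positivity),
    log_le_iff_le_exp (by positivity)] at h
  rw [sinrCcdf, exp_neg]
  exact inv_anti₀ (by positivity) h

lemma le_sinrCcdf {x : ℝ} (hx : x ∈ Icc 0 9) : ((1 + 1 / 3 * x) ^ 3)⁻¹ ≤ sinrCcdf x := by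
  have hx0 : 0 ≤ x := hx.1
  have hsqrt : √x ∈ Icc 0 3 := ⟨sqrt_nonneg x, sqrt_le_iff.2 ⟨by norm_num, by linarith [hx.2]⟩⟩
  have h : √x * arctan √x ≤ log ((1 + 1 / 3 * x) ^ 3) := by
    simpa [sq_sqrt hx0] using mul_arctan_le_three_mul_log hsqrt
  rw [le_log_iff_exp_le (by positivity)] at h
  rw [sinrCcdf, exp_neg]
  exact inv_anti₀ (exp_pos _) h

lemma hasDerivAt_log_one_add_mul {a x : ℝ} (ha : 0 ≤ a) (hx : 0 ≤ x) :
    HasDerivAt (fun x => log (1 + a * x)) (a / (1 + a * x)) x := by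
  have h : HasDerivAt (fun x : ℝ => 1 + a * x) a x := by
    simpa using ((hasDerivAt_id x).const_mul a).const_add 1
  exact h.log (by positivity)

open Filter Topology in
lemma tendsto_log_one_add_mul_sub_log {a : ℝ} (ha : 0 < a) :
    Tendsto (fun x => log (1 + a * x) - log x) atTop (𝓝 (log a)) := by
  have h : Tendsto (fun x : ℝ => log (x⁻¹ + a)) atTop (𝓝 (log a)) := by
    simpa using (tendsto_inv_atTop_zero.add_const a).log (by simpa using ha.ne')
  refine h.congr' ?_
  filter_upwards [eventually_gt_atTop 0] with x hx
  rw [← log_div (by positivity) hx.ne']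
  congr 1
  field_simp

section PartialFractions

variable {a b c : ℝ}

lemma hasDerivAt_sum_log_one_add_mul (ha : 0 < a) (hb : 0 < b) (hc : 0 < c) (hab : a ≠ b)
    (hac : a ≠ c) (hbc : b ≠ c) {x : ℝ} (hx : 0 ≤ x) :
    HasDerivAt (fun x => a / ((a - b) * (a - c)) * log (1 + a * x) +
        b / ((b - a) * (b - c)) * log (1 + b * x) + c / ((c - a) * (c - b)) * log (1 + c * x))
      ((1 + a * x) * (1 + b * x) * (1 + c * x))⁻¹ x := by
  have hab' := sub_ne_zero.2 hab
  have hac' := sub_ne_zero.2 hac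
  have hbc' := sub_ne_zero.2 hbc
  refine ((((hasDerivAt_log_one_add_mul ha.le hx).const_mul _).add
    ((hasDerivAt_log_one_add_mul hb.le hx).const_mul _)).add
    ((hasDerivAt_log_one_add_mul hc.le hx).const_mul _)).congr_deriv ?_
  rw [← neg_sub a b, ← neg_sub a c, ← neg_sub b c]
  field_simp
  ring

open Filter Topology in
lemma tendsto_sum_log_one_add_mul (ha : 0 < a) (hb : 0 < b) (hc : 0 < c) (hab : a ≠ b)
    (hac : a ≠ c) (hbc : b ≠ c) :
    Tendsto (fun x => a / ((a - b) * (a - c)) * log (1 + a * x) +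
        b / ((b - a) * (b - c)) * log (1 + b * x) + c / ((c - a) * (c - b)) * log (1 + c * x))
      atTop (𝓝 (a / ((a - b) * (a - c)) * log a + b / ((b - a) * (b - c)) * log b +
        c / ((c - a) * (c - b)) * log c)) := by
  have hsum : a / ((a - b) * (a - c)) + b / ((b - a) * (b - c)) + c / ((c - a) * (c - b)) = 0 := by
    have hab' := sub_ne_zero.2 hab
    have hac' := sub_ne_zero.2 hac
    have hbc' := sub_ne_zero.2 hbc
    rw [← neg_sub a b, ← neg_sub a c, ← neg_sub b c]
    field_simp
    ring
  refine ((((tendsto_log_one_add_mul_sub_log ha).const_mul _).add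
    ((tendsto_log_one_add_mul_sub_log hb).const_mul _)).add
    ((tendsto_log_one_add_mul_sub_log hc).const_mul _)).congr fun x => ?_
  linear_combination -log x * hsum

lemma integrableOn_Ioi_inv_mul_mul (ha : 0 < a) (hb : 0 < b) (hc : 0 < c) (hab : a ≠ b)
    (hac : a ≠ c) (hbc : b ≠ c) :
    IntegrableOn (fun x => ((1 + a * x) * (1 + b * x) * (1 + c * x))⁻¹) (Ioi 0) :=
  integrableOn_Ioi_deriv_of_nonneg'
    (fun _ hx => hasDerivAt_sum_log_one_add_mul ha hb hc hab hac hbc hx)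
    (fun x (hx : 0 < x) => by positivity) (tendsto_sum_log_one_add_mul ha hb hc hab hac hbc)

lemma integral_Ioi_inv_mul_mul (ha : 0 < a) (hb : 0 < b) (hc : 0 < c) (hab : a ≠ b)
    (hac : a ≠ c) (hbc : b ≠ c) :
    ∫ x in Ioi 0, ((1 + a * x) * (1 + b * x) * (1 + c * x))⁻¹ =
      a / ((a - b) * (a - c)) * log a + b / ((b - a) * (b - c)) * log b +
        c / ((c - a) * (c - b)) * log c := by
  rw [integral_Ioi_of_hasDerivAt_of_nonneg'
    (fun _ hx => hasDerivAt_sum_log_one_add_mul ha hb hc hab hac hbc hx)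
    (fun x (hx : 0 < x) => by positivity) (tendsto_sum_log_one_add_mul ha hb hc hab hac hbc)]
  simp

end PartialFractions

lemma sinrCcdf_div_add_one_le {x : ℝ} (hx : 0 ≤ x) :
    sinrCcdf x / (x + 1) ≤ ((1 + 1 / 5 * x) * (1 + 4 / 5 * x) * (1 + 1 * x))⁻¹ := by
  rw [mul_inv, one_mul, ← div_eq_mul_inv, add_comm x 1]
  gcongr
  exact sinrCcdf_le hx

lemma le_sinrCcdf_div_add_one {x : ℝ} (hx : x ∈ Icc 0 9) :
    ((1 + 1 / 3 * x) ^ 3)⁻¹ / (x + 1) ≤ sinrCcdf x / (x + 1) := by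
  have hx0 : 0 ≤ x := hx.1
  gcongr
  exact le_sinrCcdf hx

lemma hasDerivAt_antideriv_inv_cube_div_add_one {x : ℝ} (hx : 0 ≤ x) :
    HasDerivAt (fun x => 27 / 8 * (log (x + 1) - log (x + 3)) +
        27 / 4 * ((x + 3)⁻¹ + ((x + 3) ^ 2)⁻¹))
      (((1 + 1 / 3 * x) ^ 3)⁻¹ / (x + 1)) x := by
  have h_one : HasDerivAt (fun x : ℝ => x + 1) 1 x := (hasDerivAt_id x).add_const 1
  have h_three : HasDerivAt (fun x : ℝ => x + 3) 1 x := (hasDerivAt_id x).add_const 3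
  refine ((((h_one.log (by positivity)).sub (h_three.log (by positivity))).const_mul _).add
    (((h_three.fun_inv (by positivity)).add ((h_three.fun_pow 2).fun_inv (by positivity))).const_mul
      _)).congr_deriv ?_
  field_simp
  ring

lemma continuousOn_inv_cube_div_add_one :
    ContinuousOn (fun x : ℝ => ((1 + 1 / 3 * x) ^ 3)⁻¹ / (x + 1)) (Ici 0) := by
  refine ContinuousOn.div (ContinuousOn.inv₀ (by fun_prop) ?_) (by fun_prop) ?_ <;>
  · intro x (hx : 0 ≤ x)
    positivity

lemma integral_inv_cube_div_add_one :
    ∫ x in (0 : ℝ)..9, ((1 + 1 / 3 * x) ^ 3)⁻¹ / (x + 1) =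
      27 / 8 * (log 5 - log 2) - 153 / 64 := by
  have hsub : uIcc (0 : ℝ) 9 ⊆ Ici 0 := by
    rw [uIcc_of_le (by norm_num)]
    exact Icc_subset_Ici_self
  rw [intervalIntegral.integral_eq_sub_of_hasDerivAt
    (fun x hx => hasDerivAt_antideriv_inv_cube_div_add_one (hsub hx))
    (continuousOn_inv_cube_div_add_one.mono hsub).intervalIntegrable]
  have hlog_ten : log (9 + 1) = log 5 + log 2 := by
    rw [← log_mul (by norm_num) (by norm_num)]
    norm_num
  have hlog_twelve : log (9 + 3) = log 3 + 2 * log 2 := by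
    rw [← log_rpow two_pos, ← log_mul (by norm_num) (by norm_num)]
    norm_num
  rw [hlog_ten, hlog_twelve, zero_add, log_one, zero_add]
  ring

lemma integrableOn_inv_quadratic_mul_one_add :
    IntegrableOn (fun x : ℝ => ((1 + 1 / 5 * x) * (1 + 4 / 5 * x) * (1 + 1 * x))⁻¹) (Ioi 0) :=
  integrableOn_Ioi_inv_mul_mul (by norm_num) (by norm_num) one_pos (by norm_num) (by norm_num)
    (by norm_num)

lemma integrableOn_sinrCcdf_div_add_one :
    IntegrableOn (fun x => sinrCcdf x / (x + 1)) (Ioi 0) := by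
  have hcont : ContinuousOn (fun x => sinrCcdf x / (x + 1)) (Ioi 0) :=
    continuous_sinrCcdf.continuousOn.div (by fun_prop) fun x (hx : 0 < x) => by positivity
  refine Integrable.mono' integrableOn_inv_quadratic_mul_one_add
    (hcont.aestronglyMeasurable measurableSet_Ioi) ?_
  filter_upwards [ae_restrict_mem measurableSet_Ioi] with x (hx : 0 < x)
  rw [norm_of_nonneg (div_nonneg (sinrCcdf_pos x).le (by positivity))]
  exact sinrCcdf_div_add_one_le hx.le

lemma integral_sinrCcdf_div_add_one_le :
    ∫ x in Ioi 0, sinrCcdf x / (x + 1) ≤ 25 / 4 * log 5 - 40 / 3 * log 2 := by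
  have hlog_four : log 4 = 2 * log 2 := by
    rw [← log_rpow two_pos]
    norm_num
  calc ∫ x in Ioi 0, sinrCcdf x / (x + 1)
      ≤ ∫ x in Ioi 0, ((1 + 1 / 5 * x) * (1 + 4 / 5 * x) * (1 + 1 * x))⁻¹ :=
        setIntegral_mono_on integrableOn_sinrCcdf_div_add_one integrableOn_inv_quadratic_mul_one_add
          measurableSet_Ioi fun x (hx : 0 < x) => sinrCcdf_div_add_one_le hx.le
    _ = 25 / 4 * log 5 - 40 / 3 * log 2 := by
        rw [integral_Ioi_inv_mul_mul (by norm_num) (by norm_num) one_pos (by norm_num)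
          (by norm_num) (by norm_num), log_div (by norm_num) (by norm_num),
          log_div (by norm_num) (by norm_num), log_one, hlog_four]
        ring

lemma le_integral_sinrCcdf_div_add_one :
    27 / 8 * (log 5 - log 2) - 153 / 64 ≤ ∫ x in Ioi 0, sinrCcdf x / (x + 1) := by
  rw [← integral_inv_cube_div_add_one, intervalIntegral.integral_of_le (by norm_num)]
  have hsub : Ioc (0 : ℝ) 9 ⊆ Ioi 0 := Ioc_subset_Ioi_self
  have hnonneg : ∀ x ∈ Ioi (0 : ℝ), 0 ≤ sinrCcdf x / (x + 1) := fun x (hx : 0 < x) =>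
    div_nonneg (sinrCcdf_pos x).le (by positivity)
  calc ∫ x in Ioc (0 : ℝ) 9, ((1 + 1 / 3 * x) ^ 3)⁻¹ / (x + 1)
      ≤ ∫ x in Ioc 0 9, sinrCcdf x / (x + 1) :=
        setIntegral_mono_on
          ((continuousOn_inv_cube_div_add_one.mono Icc_subset_Ici_self).integrableOn_Icc.mono_set
            Ioc_subset_Icc_self)
          (integrableOn_sinrCcdf_div_add_one.mono_set hsub) measurableSet_Ioc
          fun x hx => le_sinrCcdf_div_add_one (Ioc_subset_Icc_self hx)
    _ ≤ ∫ x in Ioi 0, sinrCcdf x / (x + 1) :=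
        setIntegral_mono_set integrableOn_sinrCcdf_div_add_one
          (ae_restrict_of_forall_mem measurableSet_Ioi hnonneg) hsub.eventuallyLE

/-- The uplink average spectral efficiency in the interference-limited case with `η = 4`
and infinite `P_u`, `R = ∫₀^∞ exp(-√x arctan √x)/(x+1) dx`, is finite (the integrand is
integrable on `(0,∞)`) and satisfies `0.7 < R < 0.85` (numerically `R ≈ 0.77` nat/s/Hz). -/
theorem spectral_efficiency_constant :
    IntegrableOn
        (fun x : ℝ => exp (-(Real.sqrt x * arctan (Real.sqrt x))) / (x + 1)) (Ioi 0) ∧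
    0.7 < (∫ x in Ioi (0:ℝ), exp (-(Real.sqrt x * arctan (Real.sqrt x))) / (x + 1)) ∧
    (∫ x in Ioi (0:ℝ), exp (-(Real.sqrt x * arctan (Real.sqrt x))) / (x + 1)) < 0.85 := by
  refine ⟨integrableOn_sinrCcdf_div_add_one,
    lt_of_lt_of_le ?_ le_integral_sinrCcdf_div_add_one,
    integral_sinrCcdf_div_add_one_le.trans_lt ?_⟩
  · linarith [log_five_gt_d9, log_two_lt_d9]
  · linarith [log_five_lt_d9, log_two_gt_d9]
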